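/- Let E be a finite quiver with vertex set {1,…,d}, let P = {p_1,…,p_d} be the set of vertices of the path algebra P_k(E), and let (M,μ) be a filtered left P_k(E)-module. Then there exist sets B^i_h ⊆ p_i M_h \ M_{h−1}, for i = 1,…,d and h ∈ ℕ (where M_h = {m ∈ M : μ(m) ≤ h}), such that B = ∪_{i,h} B^i_h is a weak P-μ-basis for M. Moreover, the cardinality of each B^i_h is independent of the choice of weak P-μ-basis. -/

import Mathlib

namespace LPA

variable {R : Type} [Ring R] {M : Type} [AddCommGroup M] [Module R M]

/-- A filtration on a ring `R`: a degree function `ν : R → ℕ ∪ {-∞}`. -/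
structure IsRingFiltration (ν : R → WithBot ℕ) : Prop where
  map_zero : ν 0 = ⊥
  nonneg : ∀ r : R, r ≠ 0 → 0 ≤ ν r
  sub_le : ∀ r s : R, ν (r - s) ≤ max (ν r) (ν s)
  mul_le : ∀ r s : R, ν (r * s) ≤ ν r + ν s
  map_one : ν 1 = 0

/-- A set of vertices in a filtered ring: a finite set of zero-degree, pairwise orthogonal
idempotents summing to `1`. -/
structure IsVertexSet (ν : R → WithBot ℕ) (P : Finset R) : Prop where
  idem : ∀ p ∈ P, p * p = p
  deg_eq_zero : ∀ p ∈ P, ν p = 0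
  orthogonal : ∀ p ∈ P, ∀ q ∈ P, p ≠ q → p * q = 0
  sum_eq_one : ∑ p ∈ P, p = 1

/-- A filtration on a module over a filtered ring. -/
structure IsModuleFiltration (ν : R → WithBot ℕ) (μ : M → WithBot ℕ) : Prop where
  map_zero : μ 0 = ⊥
  nonneg : ∀ m : M, m ≠ 0 → 0 ≤ μ m
  sub_le : ∀ m n : M, μ (m - n) ≤ max (μ m) (μ n)
  smul_le : ∀ (r : R) (m : M), μ (r • m) ≤ ν r + μ m

/-- The family `(m i)`, with `m i ∈ (n i)•M`, is left `P`-`μ`-dependent: some `m i = 0`, or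
there is a finitely supported family `(r i)` with `r i ∈ R·(n i)` such that the degree of
`∑ r i • m i` is strictly smaller than its formal degree `max (ν (r i) + μ (m i))`. -/
def DepFamily (ν : R → WithBot ℕ) (μ : M → WithBot ℕ) {I : Type} (n : I → R) (m : I → M) :
    Prop :=
  (∃ i, m i = 0) ∨ ∃ r : I →₀ R, (∀ i, r i * n i = r i) ∧
    μ (r.sum fun i ri => ri • m i) < r.support.sup fun i => ν (r i) + μ (m i)

/-- The element `x` is left `P`-`μ`-dependent on the family `(m i)`. -/
def DepOn (ν : R → WithBot ℕ) (μ : M → WithBot ℕ) {I : Type} (n : I → R) (m : I → M)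
    (x : M) : Prop :=
  x = 0 ∨ ∃ r : I →₀ R, (∀ i, r i * n i = r i) ∧
    μ (x - r.sum fun i ri => ri • m i) < μ x ∧ ∀ i, ν (r i) + μ (m i) ≤ μ x

/-- The element `x` is left `P`-`μ`-dependent on the set `S`. -/
def DepOnSet (ν : R → WithBot ℕ) (μ : M → WithBot ℕ) (P : Finset R) (S : Set M) (x : M) :
    Prop :=
  ∃ (I : Type) (n : I → R) (m : I → M), (∀ i, n i ∈ P) ∧ (∀ i, ∃ s ∈ S, m i = n i • s) ∧
    DepOn ν μ n m x

/-- `M` satisfies the weak algorithm relative to `μ` and `P`: in every finite left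
`P`-`μ`-dependent family with weakly increasing degrees, some member is left
`P`-`μ`-dependent on the preceding ones. -/
def WeakAlgorithm (ν : R → WithBot ℕ) (P : Finset R) (μ : M → WithBot ℕ) : Prop :=
  ∀ (ℓ : ℕ) (n : Fin ℓ → R) (m : Fin ℓ → M),
    (∀ i, n i ∈ P) → (∀ i, n i • m i = m i) →
    (∀ i j : Fin ℓ, i ≤ j → μ (m i) ≤ μ (m j)) →
    DepFamily ν μ n m →
    ∃ i : Fin ℓ, DepOn ν μ (fun j : {j : Fin ℓ // j < i} => n j.1)
      (fun j : {j : Fin ℓ // j < i} => m j.1) (m i)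

/-- A weak `P`-`μ`-basis for `M`. -/
def IsWeakBasis (ν : R → WithBot ℕ) (P : Finset R) (μ : M → WithBot ℕ) (B : Set M) : Prop :=
  (∀ b ∈ B, ∃ p ∈ P, ∃ m : M, b = p • m) ∧
  (∀ x : M, DepOnSet ν μ P B x) ∧
  (∀ b ∈ B, ¬ DepOnSet ν μ P (B \ {b}) b)

end LPA

namespace LPA

/-- A finite quiver: finite sets of vertices and arrows with source and target maps. -/
structure FinQuiver : Type 1 where
  V : Type
  A : Type
  [fintypeV : Fintype V]
  [decEqV : DecidableEq V]
  [fintypeA : Fintype A]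
  [decEqA : DecidableEq A]
  src : A → V
  tgt : A → V

attribute [instance] FinQuiver.fintypeV FinQuiver.decEqV FinQuiver.fintypeA FinQuiver.decEqA

/-- The inverse quiver: all arrows reversed. -/
def FinQuiver.rev (Q : FinQuiver) : FinQuiver where
  V := Q.V
  A := Q.A
  fintypeV := Q.fintypeV
  decEqV := Q.decEqV
  fintypeA := Q.fintypeA
  decEqA := Q.decEqA
  src := Q.tgt
  tgt := Q.src

/-- Generators of the path algebra: a trivial path `p v` for each vertex and an arrow `e` for
each arrow. -/
inductive PathGen (Q : FinQuiver) : Type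
  | vertex (v : Q.V) : PathGen Q
  | edge (e : Q.A) : PathGen Q

/-- Defining relations of the path algebra: the trivial paths are pairwise orthogonal
idempotents summing to `1`, and `p (src e) * e = e = e * p (tgt e)`. -/
inductive PathRel (k : Type) [CommRing k] (Q : FinQuiver) :
    FreeAlgebra k (PathGen Q) → FreeAlgebra k (PathGen Q) → Prop
  | vertex_mul_self (v : Q.V) :
      PathRel k Q (FreeAlgebra.ι k (PathGen.vertex v) * FreeAlgebra.ι k (PathGen.vertex v))
        (FreeAlgebra.ι k (PathGen.vertex v))
  | vertex_mul_ne (v w : Q.V) (h : v ≠ w) :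
      PathRel k Q (FreeAlgebra.ι k (PathGen.vertex v) * FreeAlgebra.ι k (PathGen.vertex w)) 0
  | sum_vertex :
      PathRel k Q (∑ v : Q.V, FreeAlgebra.ι k (PathGen.vertex v)) 1
  | src_mul (e : Q.A) :
      PathRel k Q
        (FreeAlgebra.ι k (PathGen.vertex (Q.src e)) * FreeAlgebra.ι k (PathGen.edge e))
        (FreeAlgebra.ι k (PathGen.edge e))
  | mul_tgt (e : Q.A) :
      PathRel k Q
        (FreeAlgebra.ι k (PathGen.edge e) * FreeAlgebra.ι k (PathGen.vertex (Q.tgt e)))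
        (FreeAlgebra.ι k (PathGen.edge e))

/-- The path algebra `P_k(Q)` of a finite quiver `Q`, presented by generators and relations. -/
def PathAlg (k : Type) [CommRing k] (Q : FinQuiver) : Type :=
  RingQuot (PathRel k Q)

variable (k : Type) [CommRing k] (Q : FinQuiver)

noncomputable instance : Ring (PathAlg k Q) :=
  inferInstanceAs (Ring (RingQuot (PathRel k Q)))

noncomputable instance : Algebra k (PathAlg k Q) :=
  inferInstanceAs (Algebra k (RingQuot (PathRel k Q)))

/-- The quotient map from the free algebra onto the path algebra. -/
noncomputable def PathAlg.mk : FreeAlgebra k (PathGen Q) →ₐ[k] PathAlg k Q :=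
  RingQuot.mkAlgHom k (PathRel k Q)

/-- The trivial path (vertex idempotent) `p v` in the path algebra. -/
noncomputable def PathAlg.p (v : Q.V) : PathAlg k Q :=
  PathAlg.mk k Q (FreeAlgebra.ι k (PathGen.vertex v))

/-- The arrow `e` in the path algebra. -/
noncomputable def PathAlg.arrow (e : Q.A) : PathAlg k Q :=
  PathAlg.mk k Q (FreeAlgebra.ι k (PathGen.edge e))

theorem PathAlg.mk_rel {x y : FreeAlgebra k (PathGen Q)} (h : PathRel k Q x y) :
    PathAlg.mk k Q x = PathAlg.mk k Q y :=
  RingQuot.mkAlgHom_rel k h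

theorem PathAlg.p_mul_self (v : Q.V) : PathAlg.p k Q v * PathAlg.p k Q v = PathAlg.p k Q v := by
  have h := PathAlg.mk_rel k Q (PathRel.vertex_mul_self v)
  simpa [map_mul, PathAlg.p] using h

theorem PathAlg.p_mul_ne (v w : Q.V) (hvw : v ≠ w) :
    PathAlg.p k Q v * PathAlg.p k Q w = 0 := by
  have h := PathAlg.mk_rel k Q (PathRel.vertex_mul_ne v w hvw)
  simpa [map_mul, PathAlg.p] using h

theorem PathAlg.sum_p : (∑ v : Q.V, PathAlg.p k Q v) = 1 := by
  have h := PathAlg.mk_rel k Q (PathRel.sum_vertex)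
  simpa [map_sum, PathAlg.p] using h

theorem PathAlg.arrow_mul_tgt (e : Q.A) :
    PathAlg.arrow k Q e * PathAlg.p k Q (Q.tgt e) = PathAlg.arrow k Q e := by
  have h := PathAlg.mk_rel k Q (PathRel.mul_tgt e)
  simpa [map_mul, PathAlg.p, PathAlg.arrow] using h

theorem PathAlg.src_mul_arrow (e : Q.A) :
    PathAlg.p k Q (Q.src e) * PathAlg.arrow k Q e = PathAlg.arrow k Q e := by
  have h := PathAlg.mk_rel k Q (PathRel.src_mul e)
  simpa [map_mul, PathAlg.p, PathAlg.arrow] using h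

/-- The set of vertices `{p v | v ∈ Q.V}` of the path algebra, as a finite set. -/
noncomputable def vertexFinset : Finset (PathAlg k Q) :=
  letI := Classical.decEq (PathAlg k Q)
  Finset.univ.image (PathAlg.p k Q)

end LPA

namespace LPA

variable (k : Type) [CommRing k] (Q : FinQuiver)

/-- The image in the path algebra of a word in the generators. -/
noncomputable def pathOfWord (w : FreeMonoid (PathGen Q)) : PathAlg k Q :=
  PathAlg.mk k Q (FreeMonoid.lift (FreeAlgebra.ι k) w)

/-- The number of edge-letters in a word in the generators. -/
def edgeCount (w : FreeMonoid (PathGen Q)) : ℕ :=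
  (FreeMonoid.toList w).countP fun g =>
    match g with
    | PathGen.edge _ => true
    | PathGen.vertex _ => false

/-- The `k`-span of the images of all words with at most `n` edge-letters: the elements of
degree at most `n` in the path algebra. -/
noncomputable def wordSpan (n : ℕ) : Submodule k (PathAlg k Q) :=
  Submodule.span k (pathOfWord k Q '' {w | edgeCount Q w ≤ n})

open Classical in
/-- The path-length degree function on the path algebra: `pdeg x` is the smallest `n` such
that `x` is a `k`-linear combination of paths of length at most `n` (i.e. the maximal length
of a path in the support of `x`), and `pdeg 0 = ⊥ = -∞`. -/
noncomputable def pdeg (x : PathAlg k Q) : WithBot ℕ :=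
  if x = 0 then ⊥ else ↑(sInf {n : ℕ | x ∈ wordSpan k Q n})

end LPA

namespace LPA

/-- The properties of the filtered path algebra and of the filtered module used in the proof. -/
structure Setup (k : Type) [Field k] {R : Type} [Ring R] [Algebra k R] {M : Type}
    [AddCommGroup M] [Module R M] (ν : R → WithBot ℕ) (μ : M → WithBot ℕ) (P : Finset R) :
    Prop where
  zero : ν 0 = ⊥
  nonneg : ∀ r : R, r ≠ 0 → 0 ≤ ν r
  add_le : ∀ r s : R, ν (r + s) ≤ max (ν r) (ν s)
  mul_le : ∀ r s : R, ν (r * s) ≤ ν r + ν s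
  alg_le : ∀ c : k, ν (algebraMap k R c) ≤ 0
  idem : ∀ p ∈ P, p * p = p
  orth : ∀ p ∈ P, ∀ q ∈ P, p ≠ q → p * q = 0
  sum_one : ∑ p ∈ P, p = 1
  vert_le : ∀ p ∈ P, ν p ≤ 0
  deg_zero : ∀ r : R, ν r ≤ 0 → ∀ p ∈ P, ∃ c : k, r * p = c • p
  hμ : IsModuleFiltration ν μ

section Abstract

variable {k : Type} [Field k] {R : Type} [Ring R] [Algebra k R] {M : Type}
    [AddCommGroup M] [Module R M] [Module k M] [IsScalarTower k R M]
    {ν : R → WithBot ℕ} {μ : M → WithBot ℕ} {P : Finset R}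

/-- The elements of the form `∑ r s` of formal degree at most `h`, with `s ∈ S`. -/
def G (k : Type) [Field k] {R : Type} [Ring R] {M : Type}
    [AddCommGroup M] [Module R M] [Module k M] (ν : R → WithBot ℕ) (μ : M → WithBot ℕ)
    (h : WithBot ℕ) (S : Set M) : Submodule k M :=
  Submodule.span k {x | ∃ r : R, ∃ s ∈ S, ν r + μ s ≤ h ∧ x = r • s}

/-- The part of degree at most `h` generated by elements of degree less than `h`. -/
def D (k : Type) [Field k] {R : Type} [Ring R] {M : Type}
    [AddCommGroup M] [Module R M] [Module k M] (ν : R → WithBot ℕ) (μ : M → WithBot ℕ)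
    (h : WithBot ℕ) : Submodule k M :=
  G k ν μ h {m | μ m < h}

theorem G_mono {h h' : WithBot ℕ} (hh : h ≤ h') {S T : Set M} (hST : S ⊆ T) :
    G k ν μ h S ≤ G k ν μ h' T := by
  apply Submodule.span_mono
  rintro x ⟨r, s, hs, hle, rfl⟩
  exact ⟨r, s, hST hs, hle.trans hh, rfl⟩

theorem Setup.one_le (H : Setup k ν μ P) : ν 1 ≤ 0 := by
  simpa using H.alg_le 1

theorem Setup.mem_G (H : Setup k ν μ P) {h : WithBot ℕ} {S : Set M} {s : M} (hs : s ∈ S)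
    (hle : μ s ≤ h) : s ∈ G k ν μ h S := by
  refine Submodule.subset_span ⟨1, s, hs, ?_, by simp⟩
  calc ν 1 + μ s ≤ 0 + μ s := by gcongr; exact H.one_le
    _ ≤ h := by simpa using hle

theorem Setup.smul_G (H : Setup k ν μ P) {h : WithBot ℕ} {S : Set M} (r : R) {x : M}
    (hx : x ∈ G k ν μ h S) : r • x ∈ G k ν μ (ν r + h) S := by
  induction hx using Submodule.span_induction with
  | mem x hx =>
    obtain ⟨r', s, hs, hle, rfl⟩ := hx
    refine Submodule.subset_span ⟨r * r', s, hs, ?_, by rw [mul_smul]⟩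
    calc ν (r * r') + μ s ≤ (ν r + ν r') + μ s := by gcongr; exact H.mul_le _ _
      _ = ν r + (ν r' + μ s) := add_assoc _ _ _
      _ ≤ _ := by gcongr
  | zero => simp
  | add x y _ _ hx hy => rw [smul_add]; exact add_mem hx hy
  | smul c x _ hx =>
    have : r • c • x = c • r • x := by
      rw [← algebraMap_smul R c x, ← algebraMap_smul R c (r • x), ← mul_smul, ← mul_smul,
        Algebra.commutes]
    rw [this]; exact Submodule.smul_mem _ _ hx

theorem Setup.smul_comm' (_H : Setup k ν μ P) (r : R) (c : k) (x : M) :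
    r • c • x = c • r • x := by
  rw [← algebraMap_smul R c x, ← algebraMap_smul R c (r • x), ← mul_smul, ← mul_smul,
        Algebra.commutes]

theorem Setup.trich (H : Setup k ν μ P) {r : R} {s : M} {h : ℕ}
    (hle : ν r + μ s ≤ (h : WithBot ℕ)) :
    r = 0 ∨ μ s < (h : WithBot ℕ) ∨ (μ s = (h : WithBot ℕ) ∧ ν r ≤ 0) := by
  by_cases hr : r = 0
  · exact Or.inl hr
  have h0 := H.nonneg r hr
  right
  revert h0 hle
  generalize ν r = a
  generalize μ s = b
  intro hle h0
  have hcases : ∀ a : WithBot ℕ, a = ⊥ ∨ ∃ n : ℕ, a = (n : WithBot ℕ) := by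
    intro a
    induction a using WithBot.recBotCoe with
    | bot => exact Or.inl rfl
    | coe a => exact Or.inr ⟨a, rfl⟩
  rcases hcases b with rfl | ⟨b, rfl⟩
  · left; exact WithBot.bot_lt_coe h
  rcases hcases a with rfl | ⟨a, rfl⟩
  · simp at h0
  have h1 : a + b ≤ h := by exact_mod_cast hle
  rcases Nat.lt_or_ge b h with h2 | h2
  · left; exact_mod_cast h2
  · right
    have h3 : b = h := by omega
    have h4 : a ≤ 0 := by omega
    exact ⟨by exact_mod_cast h3, by exact_mod_cast h4⟩

theorem Setup.le_D (H : Setup k ν μ P) {h : WithBot ℕ} {x : M} (hx : μ x < h) :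
    x ∈ D k ν μ h := H.mem_G (S := {m | μ m < h}) hx hx.le

/-- Homogeneous sets. -/
def Homog (P : Finset R) (S : Set M) : Prop := ∀ s ∈ S, ∃ p ∈ P, p • s = s

theorem Setup.smul_eq (H : Setup k ν μ P) {p q : R} (hp : p ∈ P) (hq : q ∈ P) {s : M}
    (hs : q • s = s) : p • s = s ∨ p • s = 0 := by
  by_cases hpq : p = q
  · left; rw [hpq, hs]
  · right; rw [← hs, ← mul_smul, H.orth p hp q hq hpq, zero_smul]

theorem Setup.pspan (H : Setup k ν μ P) {S : Set M} (hS : Homog P S) {p : R} (hp : p ∈ P)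
    {h : ℕ} {x : M} (hx : x ∈ G k ν μ (h : WithBot ℕ) S) :
    p • x ∈ D k ν μ (h : WithBot ℕ) ⊔
      Submodule.span k {s | s ∈ S ∧ p • s = s ∧ μ s = (h : WithBot ℕ)} := by
  induction hx using Submodule.span_induction with
  | mem x hx =>
    obtain ⟨r, s, hs, hle, rfl⟩ := hx
    rcases H.trich hle with rfl | hlt | ⟨heq, hr⟩
    · simp
    · apply Submodule.mem_sup_left
      refine Submodule.subset_span ⟨p * r, s, hlt, ?_, by rw [mul_smul]⟩
      calc ν (p * r) + μ s ≤ (ν p + ν r) + μ s := by gcongr; exact H.mul_le _ _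
        _ ≤ (0 + ν r) + μ s := by gcongr; exact H.vert_le p hp
        _ ≤ h := by simpa using hle
    · apply Submodule.mem_sup_right
      obtain ⟨q, hq, hqs⟩ := hS s hs
      obtain ⟨c, hc⟩ := H.deg_zero r hr q hq
      have h1 : r • s = c • s := by
        conv_lhs => rw [← hqs, ← mul_smul, hc, smul_assoc, hqs]
      rw [h1, H.smul_comm']
      apply Submodule.smul_mem
      rcases H.smul_eq hp hq hqs with h2 | h2
      · rw [h2]; exact Submodule.subset_span ⟨hs, h2, heq⟩
      · rw [h2]; exact Submodule.zero_mem _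
  | zero => simp
  | add x y _ _ hx hy => rw [smul_add]; exact add_mem hx hy
  | smul c x _ hx => rw [H.smul_comm']; exact Submodule.smul_mem _ _ hx

theorem Setup.finsupp_of_G (H : Setup k ν μ P) {S : Set M} {h : WithBot ℕ} {y : M}
    (hy : y ∈ G k ν μ h S) :
    ∃ r : S →₀ R, (∀ s, ν (r s) + μ s ≤ h) ∧ (r.sum fun s a => a • (s : M)) = y := by
  classical
  induction hy using Submodule.span_induction with
  | mem x hx =>
    obtain ⟨r, s, hs, hle, rfl⟩ := hx
    refine ⟨Finsupp.single ⟨s, hs⟩ r, ?_, by simp⟩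
    intro t
    by_cases ht : t = ⟨s, hs⟩
    · subst ht; simpa using hle
    · rw [Finsupp.single_eq_of_ne ht, H.zero]; simp
  | zero => exact ⟨0, by simp [H.zero], by simp⟩
  | add x y _ _ hx hy =>
    obtain ⟨r, hr, rfl⟩ := hx
    obtain ⟨r', hr', rfl⟩ := hy
    refine ⟨r + r', ?_, ?_⟩
    · intro s
      have h1 : ν (r s + r' s) + μ s ≤ max (ν (r s)) (ν (r' s)) + μ s := by
        gcongr; exact H.add_le _ _
      refine h1.trans ?_
      rcases max_choice (ν (r s)) (ν (r' s)) with h2 | h2 <;> rw [h2]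
      · exact hr s
      · exact hr' s
    · rw [Finsupp.sum_add_index'] <;> simp [add_smul]
  | smul c x _ hx =>
    obtain ⟨r, hr, rfl⟩ := hx
    refine ⟨r.mapRange (fun a => algebraMap k R c * a) (by simp), ?_, ?_⟩
    · intro s
      rw [Finsupp.mapRange_apply]
      calc _ ≤ (ν (algebraMap k R c) + ν (r s)) + μ s := by gcongr; exact H.mul_le _ _
        _ ≤ (0 + ν (r s)) + μ s := by gcongr; exact H.alg_le c
        _ ≤ h := by simpa using hr s
    · rw [Finsupp.sum_mapRange_index (by simp), Finsupp.smul_sum]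
      simp only [mul_smul, algebraMap_smul]

theorem Setup.dep_iff (H : Setup k ν μ P) {S : Set M} (hS : Homog P S) {x : M} (hx : x ≠ 0) :
    DepOnSet ν μ P S x ↔ ∃ y ∈ G k ν μ (μ x) S, μ (x - y) < μ x := by
  constructor
  · rintro ⟨I, n, m, hn, hm, h0 | ⟨r, hr, hlt, hle⟩⟩
    · exact absurd h0 hx
    refine ⟨_, ?_, hlt⟩
    refine Submodule.sum_mem _ fun i _ => ?_
    obtain ⟨s, hs, hms⟩ := hm i
    obtain ⟨q, hq, hqs⟩ := hS s hs
    have := hle i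
    rcases H.smul_eq (hn i) hq hqs with h1 | h1
    · rw [hms, h1] at this
      simp only [hms, h1]
      exact Submodule.subset_span ⟨r i, s, hs, this, rfl⟩
    · simp only [hms, h1, smul_zero]
      exact Submodule.zero_mem _
  · rintro ⟨y, hy, hlt⟩
    obtain ⟨r, hr, rfl⟩ := H.finsupp_of_G hy
    choose n hn hns using fun s : S => hS s s.2
    refine ⟨S, n, fun s => s, hn, fun s => ⟨s, s.2, (hns s).symm⟩, Or.inr ?_⟩
    let r' : S →₀ R := Finsupp.onFinset r.support (fun s => r s * n s) (by
      intro s hs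
      rw [Finsupp.mem_support_iff]
      intro h0
      exact hs (by rw [h0, zero_mul]))
    have hr' : ∀ s, r' s = r s * n s := fun s => rfl
    have hsum : (r'.sum fun s a => a • (s : M)) = r.sum fun s a => a • (s : M) := by
      rw [Finsupp.onFinset_sum _ (by simp), Finsupp.sum]
      refine Finset.sum_congr rfl fun s _ => ?_
      rw [mul_smul, hns]
    refine ⟨r', ?_, ?_, ?_⟩
    · intro s; rw [hr', mul_assoc, H.idem _ (hn s)]
    · rw [hsum]; exact hlt
    · intro s
      rw [hr']
      calc _ ≤ (ν (r s) + ν (n s)) + μ s := by gcongr; exact H.mul_le _ _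
        _ ≤ (ν (r s) + 0) + μ s := by gcongr; exact H.vert_le _ (hn s)
        _ ≤ _ := by simpa using hr s

theorem Setup.exists_nat (H : Setup k ν μ P) {x : M} (hx : x ≠ 0) :
    ∃ h : ℕ, μ x = (h : WithBot ℕ) := by
  have := H.hμ.nonneg x hx
  revert this
  generalize μ x = a
  intro h
  induction a using WithBot.recBotCoe with
  | bot => simp at h
  | coe a => exact ⟨a, rfl⟩

/-- If every element is dependent on `B`, then each element is a combination of elements of `B`
of the right formal degree. -/
theorem Setup.span_all (H : Setup k ν μ P) {B : Set M} (hB : Homog P B)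
    (hdep : ∀ x, DepOnSet ν μ P B x) : ∀ (h : ℕ) (x : M), μ x < (h : WithBot ℕ) →
    x ∈ G k ν μ (μ x) B := by
  intro h
  induction h with
  | zero =>
    intro x hx
    by_cases h0 : x = 0
    · rw [h0]; exact Submodule.zero_mem _
    · exact absurd (H.hμ.nonneg x h0) (not_le.mpr (by exact_mod_cast hx))
  | succ h ih =>
    intro x hx
    by_cases h0 : x = 0
    · rw [h0]; exact Submodule.zero_mem _
    obtain ⟨y, hy, hlt⟩ := (H.dep_iff hB h0).1 (hdep x)
    obtain ⟨j, hj⟩ := H.exists_nat h0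
    have hjh : j < h + 1 := by rw [hj] at hx; exact_mod_cast hx
    have h1 : μ (x - y) < (h : WithBot ℕ) := by
      refine hlt.trans_le ?_
      rw [hj]; exact_mod_cast Nat.lt_succ_iff.mp hjh
    have h2 := G_mono hlt.le (le_refl B) (ih _ h1)
    simpa using add_mem h2 hy

theorem Setup.span_all' (H : Setup k ν μ P) {B : Set M} (hB : Homog P B)
    (hdep : ∀ x, DepOnSet ν μ P B x) (x : M) : x ∈ G k ν μ (μ x) B := by
  by_cases h0 : x = 0
  · rw [h0]; exact Submodule.zero_mem _
  obtain ⟨j, hj⟩ := H.exists_nat h0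
  exact H.span_all hB hdep (j + 1) x (by rw [hj]; exact_mod_cast Nat.lt_succ_self j)

theorem mem_span_mkQ {N : Submodule k M} {T : Set M} {x : M} :
    N.mkQ x ∈ Submodule.span k (N.mkQ '' T) ↔ x ∈ N ⊔ Submodule.span k T := by
  rw [← Submodule.map_span, ← Submodule.comap_map_mkQ, Submodule.mem_comap]

theorem Setup.homog (_H : Setup k ν μ P) (hidem : ∀ p ∈ P, p * p = p) {B : Set M}
    (hB : ∀ b ∈ B, ∃ p ∈ P, ∃ m : M, b = p • m) : Homog P B := by
  intro b hb
  obtain ⟨p, hp, m, rfl⟩ := hB b hb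
  exact ⟨p, hp, by rw [← mul_smul, hidem p hp]⟩

theorem Setup.G_below (H : Setup k ν μ P) {B : Set M} {x : M} {h : ℕ} (hx : μ x < (h : WithBot ℕ))
    (hG : x ∈ G k ν μ (μ x) B) : x ∈ G k ν μ (μ x) {b | b ∈ B ∧ μ b < (h : WithBot ℕ)} := by
  refine (Submodule.span_le.2 ?_ : G k ν μ (μ x) B ≤ _) hG
  rintro z ⟨r, s, hs, hle, rfl⟩
  by_cases hr : r = 0
  · simp [hr]
  refine Submodule.subset_span ⟨r, s, ⟨hs, ?_⟩, hle, rfl⟩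
  exact lt_of_le_of_lt ((le_add_of_nonneg_left (H.nonneg r hr)).trans hle) hx

theorem Setup.D_le (H : Setup k ν μ P) {B : Set M} {h : ℕ}
    (hG : ∀ x, μ x < (h : WithBot ℕ) → x ∈ G k ν μ (μ x) B) :
    D k ν μ (h : WithBot ℕ) ≤ G k ν μ (h : WithBot ℕ) {b | b ∈ B ∧ μ b < (h : WithBot ℕ)} := by
  refine Submodule.span_le.2 ?_
  rintro z ⟨r, s, hs, hle, rfl⟩
  exact G_mono hle le_rfl (H.smul_G r (H.G_below hs (hG s hs)))

theorem Setup.basis_indep (H : Setup k ν μ P) {B : Set M} (hB : IsWeakBasis ν P μ B)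
    {p : R} (h : ℕ) :
    LinearIndepOn k (D k ν μ (h : WithBot ℕ)).mkQ
      {b | b ∈ B ∧ p • b = b ∧ μ b = (h : WithBot ℕ)} := by
  have hom := H.homog H.idem hB.1
  rw [LinearIndepOn, linearIndependent_iff_notMem_span]
  rintro ⟨b, hb, hpb, hμb⟩ hmem
  have hb0 : b ≠ 0 := by
    rintro rfl; rw [H.hμ.map_zero] at hμb; exact absurd hμb WithBot.bot_ne_coe
  have hmem' : (D k ν μ (h : WithBot ℕ)).mkQ b ∈ Submodule.span k
      ((D k ν μ (h : WithBot ℕ)).mkQ '' {c | c ∈ B \ {b} ∧ μ c = (h : WithBot ℕ)}) := by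
    refine Submodule.span_mono ?_ hmem
    rintro _ ⟨⟨c, hc, hpc, hμc⟩, hne, rfl⟩
    refine ⟨c, ⟨⟨hc, ?_⟩, hμc⟩, rfl⟩
    intro hcb
    apply hne.2
    simpa using hcb
  rw [mem_span_mkQ] at hmem'
  refine hB.2.2 b hb ((H.dep_iff (fun s hs => hom s hs.1) hb0).2 ⟨b, ?_, ?_⟩)
  · rw [hμb]
    refine (sup_le ?_ ?_ : _ ≤ G k ν μ (h : WithBot ℕ) (B \ {b})) hmem'
    · refine (H.D_le (fun x _ => H.span_all' hom hB.2.1 x)).trans (G_mono le_rfl ?_)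
      rintro c ⟨hc, hlt⟩
      refine ⟨hc, ?_⟩
      rintro rfl
      exact absurd hμb hlt.ne
    · refine Submodule.span_le.2 ?_
      rintro c ⟨hc, hμc⟩
      exact H.mem_G hc hμc.le
  · rw [sub_self, H.hμ.map_zero, hμb]; exact WithBot.bot_lt_coe h

theorem Setup.basis_span (H : Setup k ν μ P) {B : Set M} (hB : IsWeakBasis ν P μ B)
    {p : R} (hp : p ∈ P) (h : ℕ) {x : M} (hx : p • x = x) (hμx : μ x ≤ (h : WithBot ℕ)) :
    (D k ν μ (h : WithBot ℕ)).mkQ x ∈ Submodule.span k ((D k ν μ (h : WithBot ℕ)).mkQ ''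
      {b | b ∈ B ∧ p • b = b ∧ μ b = (h : WithBot ℕ)}) := by
  have hom := H.homog H.idem hB.1
  rw [mem_span_mkQ, ← hx]
  exact H.pspan hom hp (G_mono hμx le_rfl (H.span_all' hom hB.2.1 x))

theorem Setup.card_eq (H : Setup k ν μ P) {B C : Set M} (hB : IsWeakBasis ν P μ B)
    (hC : IsWeakBasis ν P μ C) {p : R} (hp : p ∈ P) (h : ℕ) :
    Cardinal.mk {b : M // b ∈ B ∧ p • b = b ∧ μ b = (h : WithBot ℕ)} =
      Cardinal.mk {c : M // c ∈ C ∧ p • c = c ∧ μ c = (h : WithBot ℕ)} := by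
  have key : ∀ B : Set M, IsWeakBasis ν P μ B →
      Cardinal.mk {b : M // b ∈ B ∧ p • b = b ∧ μ b = (h : WithBot ℕ)} =
      Module.rank k (Submodule.span k ((D k ν μ (h : WithBot ℕ)).mkQ ''
        {x | p • x = x ∧ μ x ≤ (h : WithBot ℕ)})) := by
    intro B hB
    have hind := H.basis_indep hB (p := p) h
    have hspan : Submodule.span k ((D k ν μ (h : WithBot ℕ)).mkQ ''
        {x | p • x = x ∧ μ x ≤ (h : WithBot ℕ)}) =
        Submodule.span k (Set.range fun b :
          {b : M | b ∈ B ∧ p • b = b ∧ μ b = (h : WithBot ℕ)} =>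
            (D k ν μ (h : WithBot ℕ)).mkQ b) := by
      rw [← Set.image_eq_range]
      apply le_antisymm
      · refine Submodule.span_le.2 ?_
        rintro _ ⟨x, ⟨hx, hμx⟩, rfl⟩
        exact H.basis_span hB hp h hx hμx
      · apply Submodule.span_mono
        apply Set.image_mono
        rintro b ⟨_, h1, h2⟩
        exact ⟨h1, h2.le⟩
    rw [hspan, rank_span hind, Cardinal.mk_range_eq _ hind.injective]
    rfl
  rw [key B hB, key C hC]

theorem Setup.add_le' (H : Setup k ν μ P) (x y : M) : μ (x - y) ≤ max (μ x) (μ y) :=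
  H.hμ.sub_le x y

theorem Setup.exists_basis (H : Setup k ν μ P) :
    ∃ B : Set M, IsWeakBasis ν P μ B ∧
      ∀ b ∈ B, (∃ p ∈ P, p • b = b) ∧ ∃ h : ℕ, μ b = (h : WithBot ℕ) := by
  have hex : ∀ (p : R) (h : ℕ), ∃ T ⊆ {x : M | p • x = x ∧ μ x ≤ (h : WithBot ℕ)},
      (D k ν μ (h : WithBot ℕ)).mkQ '' {x : M | p • x = x ∧ μ x ≤ (h : WithBot ℕ)} ⊆
        Submodule.span k ((D k ν μ (h : WithBot ℕ)).mkQ '' T) ∧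
      LinearIndepOn k (D k ν μ (h : WithBot ℕ)).mkQ T := by
    intro p h
    obtain ⟨T, h1, _, h2, h3⟩ := exists_linearIndepOn_extension
      (linearIndepOn_empty k (D k ν μ (h : WithBot ℕ)).mkQ)
      (Set.empty_subset {x : M | p • x = x ∧ μ x ≤ (h : WithBot ℕ)})
    exact ⟨T, h1, h2, h3⟩
  choose T hT hspan hind using hex
  have hdeg : ∀ p h, ∀ b ∈ T p h, μ b = (h : WithBot ℕ) := by
    intro p h b hb
    refine le_antisymm (hT p h hb).2 (not_lt.1 fun hlt => ?_)
    refine (hind p h).ne_zero hb ?_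
    rw [Submodule.mkQ_apply, Submodule.Quotient.mk_eq_zero]
    exact H.le_D hlt
  let B : Set M := {b | ∃ p ∈ P, ∃ h, b ∈ T p h}
  have hom : Homog P B := by
    rintro b ⟨p, hp, h, hb⟩
    exact ⟨p, hp, (hT p h hb).1⟩
  have hne : ∀ b ∈ B, b ≠ 0 := by
    rintro b ⟨p, hp, h, hb⟩ rfl
    have := hdeg p h _ hb
    rw [H.hμ.map_zero] at this
    exact WithBot.bot_ne_coe this
  have huniq : ∀ p ∈ P, ∀ h : ℕ, ∀ b ∈ B, p • b = b → μ b = (h : WithBot ℕ) → b ∈ T p h := by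
    rintro p hp h b ⟨q, hq, j, hb⟩ hpb hμb
    have h1 := hdeg q j b hb
    have hj : j = h := by
      rw [h1] at hμb; exact_mod_cast hμb
    have hpq : p = q := by
      by_contra hpq
      apply hne b ⟨q, hq, j, hb⟩
      rw [← hpb, ← (hT q j hb).1, ← mul_smul, H.orth p hp q hq hpq, zero_smul]
    rw [hpq, ← hj]; exact hb
  have hgen : ∀ (h : ℕ) (x : M), μ x = (h : WithBot ℕ) → x ∈ G k ν μ (h : WithBot ℕ) B := by
    intro h
    induction h using Nat.strong_induction_on with
    | _ h ih =>
      intro x hx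
      have hlow : ∀ y, μ y < (h : WithBot ℕ) → y ∈ G k ν μ (μ y) B := by
        intro y hy
        by_cases h0 : y = 0
        · rw [h0]; exact Submodule.zero_mem _
        obtain ⟨j, hj⟩ := H.exists_nat h0
        rw [hj] at hy ⊢
        exact ih j (by exact_mod_cast hy) y hj
      have hD := (H.D_le hlow).trans (G_mono le_rfl (fun b hb => hb.1))
      have hxs : x = ∑ p ∈ P, p • x := by
        rw [← Finset.sum_smul, H.sum_one, one_smul]
      rw [hxs]
      refine Submodule.sum_mem _ fun p hp => ?_
      have h1 : p • x ∈ {x : M | p • x = x ∧ μ x ≤ (h : WithBot ℕ)} := by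
        refine ⟨by rw [← mul_smul, H.idem p hp], ?_⟩
        calc μ (p • x) ≤ ν p + μ x := H.hμ.smul_le _ _
          _ ≤ 0 + μ x := by gcongr; exact H.vert_le p hp
          _ ≤ h := by rw [zero_add, hx]
      have h2 := hspan p h ⟨_, h1, rfl⟩
      rw [SetLike.mem_coe, mem_span_mkQ] at h2
      refine (sup_le hD (Submodule.span_le.2 ?_)) h2
      intro b hb
      exact H.mem_G ⟨p, hp, h, hb⟩ (hdeg p h b hb).le
  refine ⟨B, ⟨?_, ?_, ?_⟩, ?_⟩
  · rintro b ⟨p, hp, h, hb⟩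
    exact ⟨p, hp, b, ((hT p h hb).1).symm⟩
  · intro x
    by_cases h0 : x = 0
    · exact ⟨PEmpty, PEmpty.elim, PEmpty.elim, fun i => i.elim, fun i => i.elim, Or.inl h0⟩
    obtain ⟨j, hj⟩ := H.exists_nat h0
    refine (H.dep_iff hom h0).2 ⟨x, ?_, ?_⟩
    · rw [hj]; exact hgen j x hj
    · rw [sub_self, H.hμ.map_zero, hj]; exact WithBot.bot_lt_coe j
  · intro b hbB hdep
    obtain ⟨p, hp, h, hb⟩ := id hbB
    have hμb := hdeg p h b hb
    have hpb := (hT p h hb).1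
    have hom' : Homog P (B \ {b}) := fun s hs => hom s hs.1
    obtain ⟨y, hy, hlt⟩ := (H.dep_iff hom' (hne b hbB)).1 hdep
    rw [hμb] at hy hlt
    have h1 := H.pspan hom' hp hy
    have h2 : p • (b - y) ∈ D k ν μ (h : WithBot ℕ) := by
      apply H.le_D
      refine lt_of_le_of_lt ?_ hlt
      calc μ (p • (b - y)) ≤ ν p + μ (b - y) := H.hμ.smul_le _ _
        _ ≤ 0 + μ (b - y) := by gcongr; exact H.vert_le p hp
        _ = _ := zero_add _
    have h3 := add_mem (Submodule.mem_sup_left h2) h1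
    rw [← smul_add, sub_add_cancel, hpb, ← mem_span_mkQ] at h3
    refine (linearIndependent_iff_notMem_span.1 (hind p h)) ⟨b, hb⟩ (Submodule.span_mono ?_ h3)
    rintro _ ⟨c, ⟨⟨hcB, hcb⟩, hpc, hμc⟩, rfl⟩
    refine ⟨⟨c, huniq p hp h c hcB hpc hμc⟩, ⟨trivial, ?_⟩, rfl⟩
    intro heq
    exact hcb (by simpa using heq)
  · intro b hb
    exact ⟨hom b hb, H.exists_nat (hne b hb)⟩

end Abstract

section Path

variable (k : Type) [Field k] (Q : FinQuiver)

theorem pathOfWord_mul (u w : FreeMonoid (PathGen Q)) :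
    pathOfWord k Q (u * w) = pathOfWord k Q u * pathOfWord k Q w := by
  simp [pathOfWord]

theorem edgeCount_mul (u w : FreeMonoid (PathGen Q)) :
    edgeCount Q (u * w) = edgeCount Q u + edgeCount Q w := by
  simp [edgeCount, FreeMonoid.toList_mul, List.countP_append]

theorem wordSpan_mul {m n : ℕ} {x y : PathAlg k Q} (hx : x ∈ wordSpan k Q m)
    (hy : y ∈ wordSpan k Q n) : x * y ∈ wordSpan k Q (m + n) := by
  have h := Submodule.mul_mem_mul hx hy
  rw [wordSpan, wordSpan, Submodule.span_mul_span] at h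
  refine Submodule.span_mono ?_ h
  rintro _ ⟨_, ⟨u, hu, rfl⟩, _, ⟨w, hw, rfl⟩, rfl⟩
  refine ⟨u * w, ?_, pathOfWord_mul k Q u w⟩
  simp only [Set.mem_ofPred_eq] at *
  rw [edgeCount_mul]; omega

theorem wordSpan_mono {m n : ℕ} (h : m ≤ n) : wordSpan k Q m ≤ wordSpan k Q n := by
  apply Submodule.span_mono
  apply Set.image_mono
  intro w hw
  exact le_trans hw h

theorem one_mem_wordSpan : (1 : PathAlg k Q) ∈ wordSpan k Q 0 :=
  Submodule.subset_span ⟨1, by simp [edgeCount], by simp [pathOfWord]⟩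

theorem p_mem_wordSpan (v : Q.V) : PathAlg.p k Q v ∈ wordSpan k Q 0 :=
  Submodule.subset_span ⟨FreeMonoid.of (PathGen.vertex v), by simp [edgeCount],
    by simp [pathOfWord, PathAlg.p]⟩

theorem exists_wordSpan (x : PathAlg k Q) : ∃ n, x ∈ wordSpan k Q n := by
  obtain ⟨a, rfl⟩ : ∃ a, PathAlg.mk k Q a = x := RingQuot.mkAlgHom_surjective k (PathRel k Q) x
  induction a using FreeAlgebra.induction with
  | grade0 c =>
    refine ⟨0, ?_⟩
    rw [AlgHom.commutes, Algebra.algebraMap_eq_smul_one]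
    exact Submodule.smul_mem _ _ (one_mem_wordSpan k Q)
  | grade1 g =>
    exact ⟨edgeCount Q (FreeMonoid.of g), Submodule.subset_span ⟨FreeMonoid.of g,
      le_refl (edgeCount Q (FreeMonoid.of g)), by simp [pathOfWord]⟩⟩
  | mul a b ha hb =>
    obtain ⟨m, hm⟩ := ha
    obtain ⟨n, hn⟩ := hb
    exact ⟨m + n, by rw [map_mul]; exact wordSpan_mul k Q hm hn⟩
  | add a b ha hb =>
    obtain ⟨m, hm⟩ := ha
    obtain ⟨n, hn⟩ := hb
    refine ⟨max m n, ?_⟩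
    rw [map_add]
    exact add_mem (wordSpan_mono k Q (le_max_left _ _) hm)
      (wordSpan_mono k Q (le_max_right _ _) hn)

theorem pdeg_le_iff {x : PathAlg k Q} {n : ℕ} :
    pdeg k Q x ≤ (n : WithBot ℕ) ↔ x ∈ wordSpan k Q n := by
  unfold pdeg
  split_ifs with h
  · simp [h]
  · constructor
    · intro hle
      have hle' : sInf {n : ℕ | x ∈ wordSpan k Q n} ≤ n := by exact_mod_cast hle
      exact wordSpan_mono k Q hle' (Nat.sInf_mem (s := {n : ℕ | x ∈ wordSpan k Q n})
        (exists_wordSpan k Q x))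
    · intro hx
      have : sInf {n : ℕ | x ∈ wordSpan k Q n} ≤ n := Nat.sInf_le hx
      exact_mod_cast this

theorem pdeg_zero : pdeg k Q 0 = ⊥ := by simp [pdeg]

theorem pdeg_coe {x : PathAlg k Q} (hx : x ≠ 0) : ∃ n : ℕ, pdeg k Q x = (n : WithBot ℕ) := by
  unfold pdeg
  rw [if_neg hx]
  exact ⟨_, rfl⟩

theorem wordSpan_zero_mul (v : Q.V) {r : PathAlg k Q} (hr : r ∈ wordSpan k Q 0) :
    ∃ c : k, r * PathAlg.p k Q v = c • PathAlg.p k Q v := by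
  induction hr using Submodule.span_induction with
  | mem x hx =>
    obtain ⟨w, hw, rfl⟩ := hx
    induction w using FreeMonoid.inductionOn' with
    | one => exact ⟨1, by simp [pathOfWord]⟩
    | of_mul g w ih =>
      simp only [Set.mem_ofPred_eq, edgeCount_mul] at hw
      obtain ⟨c, hc⟩ := ih (by simp only [Set.mem_ofPred_eq]; omega)
      rw [pathOfWord_mul, mul_assoc, hc]
      cases g with
      | edge e => simp [edgeCount] at hw
      | vertex u =>
        have : pathOfWord k Q (FreeMonoid.of (PathGen.vertex u)) = PathAlg.p k Q u := by
          simp [pathOfWord, PathAlg.p]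
        rw [this, mul_smul_comm]
        by_cases huv : u = v
        · subst huv; exact ⟨c, by rw [PathAlg.p_mul_self]⟩
        · exact ⟨0, by rw [PathAlg.p_mul_ne k Q u v huv]; simp⟩
  | zero => exact ⟨0, by simp⟩
  | add x y _ _ hx hy =>
    obtain ⟨a, ha⟩ := hx
    obtain ⟨b, hb⟩ := hy
    exact ⟨a + b, by rw [add_mul, ha, hb, add_smul]⟩
  | smul c x _ hx =>
    obtain ⟨a, ha⟩ := hx
    exact ⟨c * a, by rw [smul_mul_assoc, ha, mul_smul]⟩

theorem mem_vertexFinset {p : PathAlg k Q} : p ∈ vertexFinset k Q ↔ ∃ v, PathAlg.p k Q v = p := by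
  simp [vertexFinset]

theorem sum_vertexFinset : ∑ p ∈ vertexFinset k Q, p = 1 := by
  classical
  rw [← PathAlg.sum_p k Q]
  have hz : ∀ v w : Q.V, v ≠ w → PathAlg.p k Q v = PathAlg.p k Q w → PathAlg.p k Q v = 0 := by
    intro v w hvw h
    rw [← PathAlg.p_mul_self, ← PathAlg.p_mul_ne k Q v w hvw, ← h]
  unfold vertexFinset
  rw [Finset.sum_image_of_pairwise_eq_zero]
  intro v _ w _ hvw h
  exact hz v w hvw h

theorem setup {M : Type} [AddCommGroup M] [Module (PathAlg k Q) M] (μ : M → WithBot ℕ)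
    (hμ : IsModuleFiltration (pdeg k Q) μ) :
    Setup k (pdeg k Q) μ (vertexFinset k Q) where
  zero := pdeg_zero k Q
  nonneg r hr := by
    obtain ⟨n, hn⟩ := pdeg_coe k Q hr
    rw [hn]; exact_mod_cast Nat.zero_le n
  add_le r s := by
    by_cases hr : r = 0
    · simp [hr]
    by_cases hs : s = 0
    · simp [hs]
    obtain ⟨m, hm⟩ := pdeg_coe k Q hr
    obtain ⟨n, hn⟩ := pdeg_coe k Q hs
    have h1 := (pdeg_le_iff k Q).1 hm.le
    have h2 := (pdeg_le_iff k Q).1 hn.le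
    rw [hm, hn]
    refine le_trans (b := ((max m n : ℕ) : WithBot ℕ)) ?_ (by push_cast; exact le_rfl)
    exact (pdeg_le_iff k Q).2 (add_mem (wordSpan_mono k Q (le_max_left _ _) h1)
      (wordSpan_mono k Q (le_max_right _ _) h2))
  mul_le r s := by
    by_cases hr : r = 0
    · simp [hr, pdeg_zero]
    by_cases hs : s = 0
    · simp [hs, pdeg_zero]
    obtain ⟨m, hm⟩ := pdeg_coe k Q hr
    obtain ⟨n, hn⟩ := pdeg_coe k Q hs
    have h1 := (pdeg_le_iff k Q).1 hm.le
    have h2 := (pdeg_le_iff k Q).1 hn.le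
    rw [hm, hn, ← Nat.cast_add]
    exact (pdeg_le_iff k Q).2 (wordSpan_mul k Q h1 h2)
  alg_le c := by
    refine (pdeg_le_iff k Q (n := 0)).2 ?_
    rw [Algebra.algebraMap_eq_smul_one]
    exact Submodule.smul_mem _ _ (one_mem_wordSpan k Q)
  idem p hp := by
    obtain ⟨v, rfl⟩ := (mem_vertexFinset k Q).1 hp
    exact PathAlg.p_mul_self k Q v
  orth p hp q hq hpq := by
    obtain ⟨v, rfl⟩ := (mem_vertexFinset k Q).1 hp
    obtain ⟨w, rfl⟩ := (mem_vertexFinset k Q).1 hq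
    exact PathAlg.p_mul_ne k Q v w (fun h => hpq (by rw [h]))
  sum_one := sum_vertexFinset k Q
  vert_le p hp := by
    obtain ⟨v, rfl⟩ := (mem_vertexFinset k Q).1 hp
    exact (pdeg_le_iff k Q (n := 0)).2 (p_mem_wordSpan k Q v)
  deg_zero r hr p hp := by
    obtain ⟨v, rfl⟩ := (mem_vertexFinset k Q).1 hp
    exact wordSpan_zero_mul k Q v ((pdeg_le_iff k Q (n := 0)).1 hr)
  hμ := hμ

end Path

end LPA

open LPA in
/-- Every filtered module `(M, μ)` over the path algebra `P_k(E)` (with the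
path-length degree `ν = pdeg` and set of vertices `P = {p_1, …, p_d}`) has a weak
`P`-`μ`-basis `B`, graded in the sense that every `b ∈ B` lies in `p_i M_h \ M_{h-1}` for a
(unique) vertex `p_i` and some `h ∈ ℕ` (i.e. `p_i • b = b` and `μ b = h`).  Moreover, for each
vertex `p` and each `h`, the cardinality of `{b ∈ B | p • b = b, μ b = h}` is the same for all
weak `P`-`μ`-bases. -/
theorem statement_5 (k : Type) [Field k] (Q : FinQuiver) (M : Type) [AddCommGroup M]
    [Module (PathAlg k Q) M] (μ : M → WithBot ℕ)
    (hμ : IsModuleFiltration (pdeg k Q) μ) :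
    (∃ B : Set M, IsWeakBasis (pdeg k Q) (vertexFinset k Q) μ B ∧
      ∀ b ∈ B, (∃ p ∈ vertexFinset k Q, p • b = b) ∧ ∃ h : ℕ, μ b = (h : WithBot ℕ)) ∧
    ∀ B C : Set M, IsWeakBasis (pdeg k Q) (vertexFinset k Q) μ B →
      IsWeakBasis (pdeg k Q) (vertexFinset k Q) μ C →
      ∀ p ∈ vertexFinset k Q, ∀ h : ℕ,
        Cardinal.mk {b : M // b ∈ B ∧ p • b = b ∧ μ b = (h : WithBot ℕ)} =
          Cardinal.mk {c : M // c ∈ C ∧ p • c = c ∧ μ c = (h : WithBot ℕ)} := by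
  let _ : Module k M := Module.compHom M (algebraMap k (PathAlg k Q))
  have : IsScalarTower k (PathAlg k Q) M := ⟨fun c r m => by
    rw [Algebra.smul_def, mul_smul]; rfl⟩
  have H := setup k Q μ hμ
  exact ⟨H.exists_basis, fun B C hB hC p hp h => H.card_eq hB hC hp h⟩
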